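/- arXiv:2405.12064 — 2 statements merged into one kernel-verified Lean document; each statement's English description precedes it below -/
import Mathlib

section
/- There is an absolute constant C > 0 with the following property. Let 𝕎 = ⋃_{i=0}^{J−1} 𝕎_i ⊆ [−1/2, 1/2]² be a cubic multiband set consisting of J ≥ 1 pairwise disjoint closed rectangles. Then for all M, N ≥ 2 and every ε ∈ (0, 1/2), the number of indices p ∈ {0, …, MN−1} with ε ≤ λ_{(M,N),𝕎}^{(p)} ≤ 1 − ε is at most C·J·(M·log N + N·log M)/(ε(1−ε)). -/
open MeasureTheory Matrix Real Set

/-- The 2-D prolate matrix `B_{(M,N),𝕎}`, indexed by pairs, with entries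
`∫_𝕎 exp(2πi (f (m−p) + g (n−q))) df dg`. -/
noncomputable def prolate2D (M N : ℕ) (𝕎 : Set (ℝ × ℝ)) :
    Matrix (Fin M × Fin N) (Fin M × Fin N) ℂ :=
  fun i j => ∫ fg in 𝕎,
    Complex.exp (2 * (Real.pi : ℂ) * Complex.I *
      ((fg.1 : ℂ) * (((i.1 : ℕ) : ℂ) - ((j.1 : ℕ) : ℂ)) +
       (fg.2 : ℂ) * (((i.2 : ℕ) : ℂ) - ((j.2 : ℕ) : ℂ))))

/-- The closed rectangle `[f0 − W0, f0 + W0] × [f1 − W1, f1 + W1] ⊆ ℝ²`. -/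
def rect2 (f0 f1 W0 W1 : ℝ) : Set (ℝ × ℝ) :=
  Set.Icc (f0 - W0) (f0 + W0) ×ˢ Set.Icc (f1 - W1) (f1 + W1)

lemma aux_row (G : ℤ → ℝ) (hG : ∀ k, G (-k) = G k) (m r : ℕ) :
    ∑ p ∈ Finset.range (m + 1 + r), G ((m : ℤ) - p) =
      G 0 + ∑ k ∈ Finset.range m, G ((k : ℤ) + 1) + ∑ k ∈ Finset.range r, G ((k : ℤ) + 1) := by
  rw [Finset.sum_range_add]
  congr 1
  · rw [← Finset.sum_range_reflect, Finset.sum_range_succ']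
    rw [add_comm]
    congr 1
    · congr 1; simp
    · apply Finset.sum_congr rfl
      intro k hk
      have := Finset.mem_range.mp hk
      congr 1
      omega
  · apply Finset.sum_congr rfl
    intro k hk
    rw [← hG]
    congr 1
    push_cast
    ring

lemma aux_hasSum (x : ℝ) (hx : x ∈ Set.Icc (0 : ℝ) 1) :
    HasSum (fun n : ℕ => (1 - Real.cos (2 * π * ((n : ℝ) + 1) * x)) / (2 * π ^ 2 * ((n : ℝ) + 1) ^ 2))
      ((x - x ^ 2) / 2) := by
  have h1 := hasSum_one_div_nat_pow_mul_cos (k := 1) one_ne_zero hx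
  have h2 := hasSum_zeta_two
  have h3 := (h2.sub h1).mul_left (1 / (2 * π ^ 2))
  rw [← hasSum_nat_add_iff' 1] at h3
  have hb : (Polynomial.map (algebraMap ℚ ℝ) (Polynomial.bernoulli (2 * 1))).eval x
      = x ^ 2 - x + 1 / 6 := by
    simp [Polynomial.bernoulli, Finset.sum_range_succ, Polynomial.eval_add, Nat.choose]
    ring
  rw [hb] at h3
  have e1 : (x - x ^ 2) / 2 = 1 / (2 * π ^ 2) * (π ^ 2 / 6 - (-1) ^ (1 + 1) * (2 * π) ^ (2 * 1) / 2 /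
        ((2 * 1).factorial : ℝ) * (x ^ 2 - x + 1 / 6)) -
      ∑ i ∈ Finset.range 1, 1 / (2 * π ^ 2) *
        (1 / (i : ℝ) ^ 2 - 1 / (i : ℝ) ^ (2 * 1) * Real.cos (2 * π * (i : ℝ) * x)) := by
    simp [Nat.factorial]
    field_simp
    ring
  rw [e1]
  refine h3.congr_fun ?_
  intro n
  push_cast
  field_simp

/-- The one-dimensional deficiency estimate. -/
lemma aux_def (x : ℝ) (hx : x ∈ Set.Icc (0 : ℝ) 1) (G : ℤ → ℝ) (hG : ∀ k, G (-k) = G k)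
    (h0 : G 0 = x ^ 2)
    (h1 : ∀ n : ℕ, G ((n : ℤ) + 1) =
      (1 - Real.cos (2 * π * ((n : ℝ) + 1) * x)) / (2 * π ^ 2 * ((n : ℝ) + 1) ^ 2))
    (N : ℕ) (hN : 2 ≤ N) :
    ∑ m ∈ Finset.range N, ∑ p ∈ Finset.range N, G ((m : ℤ) - p) ≤ x * N ∧
    x * N - ∑ m ∈ Finset.range N, ∑ p ∈ Finset.range N, G ((m : ℤ) - p) ≤ 2 * Real.log N := by
  have hs : HasSum (fun n : ℕ => G ((n : ℤ) + 1)) ((x - x ^ 2) / 2) := by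
    simp_rw [h1]; exact aux_hasSum x hx
  have hnn : ∀ n : ℕ, 0 ≤ G ((n : ℤ) + 1) := by
    intro n; rw [h1]
    have := Real.cos_le_one (2 * π * ((n : ℝ) + 1) * x)
    apply div_nonneg (by linarith) (by positivity)
  have hle : ∀ n : ℕ, G ((n : ℤ) + 1) ≤ (1 / π ^ 2) * (((n + 1 : ℕ) : ℝ) ^ 2)⁻¹ := by
    intro n; rw [h1]
    have := Real.neg_one_le_cos (2 * π * ((n : ℝ) + 1) * x)
    push_cast
    calc _ ≤ 2 / (2 * π ^ 2 * ((n : ℝ) + 1) ^ 2) := by gcongr; linarith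
      _ = _ := by field_simp
  set T : ℕ → ℝ := fun m => (x - x ^ 2) / 2 - ∑ k ∈ Finset.range m, G ((k : ℤ) + 1) with hT
  have hT0 : ∀ m, 0 ≤ T m := by
    intro m
    have := sum_le_hasSum (Finset.range m) (fun i _ => hnn i) hs
    simp only [hT]; linarith
  have hT1 : ∀ m : ℕ, T m ≤ 2 / π ^ 2 * (1 / ((m : ℝ) + 1)) := by
    intro m
    have hlim := hs.tendsto_sum_nat.sub_const (∑ k ∈ Finset.range m, G ((k : ℤ) + 1))
    refine le_of_tendsto hlim ?_
    filter_upwards [Filter.eventually_ge_atTop m] with n hn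
    rw [← Finset.sum_Ico_eq_sub _ hn]
    calc ∑ k ∈ Finset.Ico m n, G ((k : ℤ) + 1)
        ≤ ∑ k ∈ Finset.Ico m n, (1 / π ^ 2) * (((k + 1 : ℕ) : ℝ) ^ 2)⁻¹ :=
          Finset.sum_le_sum fun k _ => hle k
      _ = (1 / π ^ 2) * ∑ k ∈ Finset.Ioo m (n + 1), ((k : ℝ) ^ 2)⁻¹ := by
          rw [← Finset.mul_sum, Finset.sum_Ico_add' (fun k : ℕ => ((k : ℝ) ^ 2)⁻¹) m n 1]
          rfl
      _ ≤ (1 / π ^ 2) * (2 / ((m : ℝ) + 1)) := by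
          gcongr
          exact sum_Ioo_inv_sq_le m (n + 1)
      _ = _ := by ring
  have hrow : ∀ m ∈ Finset.range N, x - ∑ p ∈ Finset.range N, G ((m : ℤ) - p)
      = T m + T (N - 1 - m) := by
    intro m hm
    have hm' := Finset.mem_range.mp hm
    obtain ⟨r, rfl⟩ := Nat.exists_eq_add_of_lt hm'
    rw [show m + r + 1 = m + 1 + r by ring, aux_row G hG,
      show m + 1 + r - 1 - m = r by omega, h0]
    simp only [hT]; ring
  have htot : x * N - ∑ m ∈ Finset.range N, ∑ p ∈ Finset.range N, G ((m : ℤ) - p)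
      = 2 * ∑ m ∈ Finset.range N, T m := by
    have e1 : x * N = ∑ m ∈ Finset.range N, x := by simp [mul_comm]
    rw [e1, ← Finset.sum_sub_distrib, Finset.sum_congr rfl hrow, Finset.sum_add_distrib,
      Finset.sum_range_reflect]
    ring
  constructor
  · have : 0 ≤ ∑ m ∈ Finset.range N, T m := Finset.sum_nonneg fun m _ => hT0 m
    linarith
  · rw [htot]
    have hh := harmonic_le_one_add_log N
    have e2 : ((harmonic N : ℚ) : ℝ) = ∑ m ∈ Finset.range N, 1 / ((m : ℝ) + 1) := by
      simp [harmonic]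
    have b1 : ∑ m ∈ Finset.range N, T m ≤ 2 / π ^ 2 * (1 + Real.log N) := by
      calc _ ≤ ∑ m ∈ Finset.range N, 2 / π ^ 2 * (1 / ((m : ℝ) + 1)) :=
            Finset.sum_le_sum fun m _ => hT1 m
        _ = 2 / π ^ 2 * ((harmonic N : ℚ) : ℝ) := by rw [← Finset.mul_sum, e2]
        _ ≤ _ := by gcongr
    have b2 : Real.log 2 ≤ Real.log N := Real.log_le_log (by norm_num) (by exact_mod_cast hN)
    have b3 := Real.log_two_gt_d9
    have b4 : 2 / π ^ 2 ≤ 2 / 9 := by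
      have := Real.pi_gt_three
      gcongr; nlinarith
    have b5 : 2 / π ^ 2 * (1 + Real.log N) ≤ 2 / 9 * (1 + Real.log N) := by
      gcongr
    linarith

lemma aux_int (a b : ℝ) (hab : a ≤ b) (k : ℝ) (hk : k ≠ 0) :
    ‖∫ t in Set.Icc a b, Complex.exp (2 * (π : ℂ) * Complex.I * ((t : ℂ) * (k : ℂ)))‖ ^ 2 =
      (1 - Real.cos (2 * π * k * (b - a))) / (2 * π ^ 2 * k ^ 2) := by
  rw [MeasureTheory.integral_Icc_eq_integral_Ioc, ← intervalIntegral.integral_of_le hab]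
  have hc : (2 * (π : ℂ) * Complex.I * (k : ℂ)) ≠ 0 := by
    simp [Real.pi_ne_zero, hk]
  have := integral_exp_mul_complex (a := a) (b := b) hc
  have e : (fun t : ℝ => Complex.exp (2 * (π : ℂ) * Complex.I * ((t : ℂ) * (k : ℂ)))) =
      fun t : ℝ => Complex.exp (2 * (π : ℂ) * Complex.I * (k : ℂ) * t) := by
    funext t; congr 1; ring
  rw [e, this, norm_div, div_pow]
  have e1 : ∀ t : ℝ, Complex.exp (2 * (π : ℂ) * Complex.I * (k : ℂ) * t) =
      Real.cos (2 * π * k * t) + Real.sin (2 * π * k * t) * Complex.I := by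
    intro t
    push_cast
    rw [← Complex.exp_mul_I]
    congr 1; ring
  have e2 : ‖2 * (π : ℂ) * Complex.I * (k : ℂ)‖ ^ 2 = 4 * π ^ 2 * k ^ 2 := by
    simp [mul_pow]; norm_num
  rw [e2, e1, e1, ← Complex.normSq_eq_norm_sq, Complex.normSq_apply]
  simp only [Complex.sub_re, Complex.add_re, Complex.sub_im, Complex.add_im, Complex.mul_re,
    Complex.mul_im, Complex.ofReal_re, Complex.ofReal_im, Complex.I_re, Complex.I_im]
  rw [show 2 * π * k * (b - a) = 2 * π * k * b - 2 * π * k * a by ring, Real.cos_sub]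
  have s1 := Real.sin_sq_add_cos_sq (2 * π * k * b)
  have s2 := Real.sin_sq_add_cos_sq (2 * π * k * a)
  field_simp
  ring_nf
  ring_nf at s1 s2
  linarith

/-- Squared Fourier coefficients of an interval. -/
noncomputable def GG (a b : ℝ) (k : ℤ) : ℝ :=
  ‖∫ t in Set.Icc a b, Complex.exp (2 * (π : ℂ) * Complex.I * ((t : ℂ) * (k : ℂ)))‖ ^ 2

lemma GG_zero (a b : ℝ) (hab : a ≤ b) : GG a b 0 = (b - a) ^ 2 := by
  have : ‖(b : ℂ) - (a : ℂ)‖ = b - a := by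
    rw [← Complex.ofReal_sub, Complex.norm_real, Real.norm_of_nonneg (by linarith)]
  simp [GG, hab, this]

lemma GG_ne (a b : ℝ) (hab : a ≤ b) (k : ℤ) (hk : k ≠ 0) : GG a b k =
    (1 - Real.cos (2 * π * k * (b - a))) / (2 * π ^ 2 * (k : ℝ) ^ 2) := by
  have := aux_int a b hab (k : ℝ) (by exact_mod_cast hk)
  rw [← this]; simp [GG]

lemma GG_neg (a b : ℝ) (hab : a ≤ b) (k : ℤ) : GG a b (-k) = GG a b k := by
  by_cases hk : k = 0
  · simp [hk]
  · rw [GG_ne a b hab _ (by omega), GG_ne a b hab _ hk]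
    push_cast
    rw [show 2 * π * -(k : ℝ) * (b - a) = -(2 * π * k * (b - a)) by ring, Real.cos_neg, neg_sq]

lemma GG_bound (a b : ℝ) (hab : a ≤ b) (hb : b - a ≤ 1) (N : ℕ) (hN : 2 ≤ N) :
    ∑ m : Fin N, ∑ p : Fin N, GG a b ((m : ℕ) - (p : ℕ) : ℤ) ≤ (b - a) * N ∧
    (b - a) * N - ∑ m : Fin N, ∑ p : Fin N, GG a b ((m : ℕ) - (p : ℕ) : ℤ) ≤ 2 * Real.log N := by
  have := aux_def (b - a) ⟨by linarith, hb⟩ (GG a b) (GG_neg a b hab) (GG_zero a b hab)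
    (fun n => by
      rw [GG_ne a b hab _ (by omega)]; push_cast; rfl) N hN
  simpa only [Finset.sum_range] using this

section PSD
open scoped ComplexOrder

lemma trace_mul_nonneg_aux {n : Type*} [Fintype n] [DecidableEq n] {A B : Matrix n n ℂ}
    (hA : A.PosSemidef) (hB : B.PosSemidef) : 0 ≤ (A * B).trace.re := by
  have h := (hA.hadamard hB.transpose).dotProduct_mulVec_nonneg (fun _ => 1)
  have e : (A * B).trace = star (fun _ : n => (1 : ℂ)) ⬝ᵥ ((A ⊙ Bᵀ) *ᵥ fun _ => 1) := by
    simp [Matrix.trace, Matrix.mul_apply, dotProduct, Matrix.mulVec]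
  rw [e]
  exact (Complex.nonneg_iff.mp h).1

lemma sum_eigs_aux {n : Type*} [Fintype n] [DecidableEq n] {A : Matrix n n ℂ}
    (hA : A.IsHermitian) :
    ∑ i, (hA.eigenvalues i - hA.eigenvalues i ^ 2) = A.trace.re - (A * A).trace.re := by
  have h1 := hA.trace_eq_sum_eigenvalues
  have h2 : (A * A).trace = ∑ i, ((hA.eigenvalues i : ℂ)) ^ 2 := by
    conv_lhs => rw [hA.spectral_theorem, ← map_mul, Unitary.conjStarAlgAut_apply, trace_mul_cycle,
      Unitary.coe_star_mul_self, one_mul, diagonal_mul_diagonal, trace_diagonal]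
    simp [sq]
  rw [h1, h2, Finset.sum_sub_distrib]
  simp only [Complex.re_sum]
  congr 1
  apply Finset.sum_congr rfl
  intro i _
  rw [← Complex.ofReal_pow, Complex.ofReal_re]

lemma eig_le_one_aux {n : Type*} [Fintype n] [DecidableEq n] {A : Matrix n n ℂ}
    (hA : A.IsHermitian) (h : (1 - A).PosSemidef) (i : n) : hA.eigenvalues i ≤ 1 := by
  have h1 := h.dotProduct_mulVec_nonneg (⇑(hA.eigenvectorBasis i))
  have h2 := hA.eigenvalues_eq i
  have h3 : star (⇑(hA.eigenvectorBasis i)) ⬝ᵥ (⇑(hA.eigenvectorBasis i)) = 1 := by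
    rw [dotProduct_comm, ← EuclideanSpace.inner_eq_star_dotProduct, inner_self_eq_norm_sq_to_K,
      hA.eigenvectorBasis.orthonormal.1 i]
    simp
  rw [Matrix.sub_mulVec, dotProduct_sub, one_mulVec, h3] at h1
  have := (Complex.nonneg_iff.mp h1).1
  simp only [Complex.sub_re, Complex.one_re] at this
  rw [h2]
  simpa using this

/-- Exponential `e^{2πi(f m + g n)}`. -/
noncomputable def EE {M N : ℕ} (x : ℝ × ℝ) (i : Fin M × Fin N) : ℂ :=
  Complex.exp (2 * (Real.pi : ℂ) * Complex.I *
      ((x.1 : ℂ) * (((i.1 : ℕ) : ℂ)) + (x.2 : ℂ) * (((i.2 : ℕ) : ℂ))))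

lemma EE_mul {M N : ℕ} (x : ℝ × ℝ) (i j : Fin M × Fin N) :
    Complex.exp (2 * (Real.pi : ℂ) * Complex.I *
      ((x.1 : ℂ) * (((i.1 : ℕ) : ℂ) - ((j.1 : ℕ) : ℂ)) +
       (x.2 : ℂ) * (((i.2 : ℕ) : ℂ) - ((j.2 : ℕ) : ℂ)))) = EE x i * star (EE x j) := by
  simp only [EE, Complex.star_def, ← Complex.exp_conj, ← Complex.exp_add]
  congr 1
  simp [Complex.conj_ofNat]
  ring

lemma prolate_apply {M N : ℕ} (S : Set (ℝ × ℝ)) (i j : Fin M × Fin N) :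
    prolate2D M N S i j = ∫ x in S, EE x i * star (EE x j) := by
  simp only [prolate2D, EE_mul]

lemma EE_cont {M N : ℕ} (i : Fin M × Fin N) : Continuous (fun x => EE x i) := by
  unfold EE; fun_prop

/-- the unit square -/
def QQ : Set (ℝ × ℝ) := Set.Icc (-(1 / 2) : ℝ) (1 / 2) ×ˢ Set.Icc (-(1 / 2) : ℝ) (1 / 2)

lemma int_aux {f : ℝ × ℝ → ℂ} (hf : Continuous f) {S : Set (ℝ × ℝ)} (hS : S ⊆ QQ) :
    IntegrableOn f S :=
  (hf.continuousOn.integrableOn_compact (isCompact_Icc.prod isCompact_Icc)).mono_set hS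

lemma prolate_psd {M N : ℕ} (S : Set (ℝ × ℝ)) (hS : S ⊆ QQ) :
    (prolate2D M N S).PosSemidef := by
  refine .of_dotProduct_mulVec_nonneg ?_ fun v => ?_
  · ext i j
    rw [conjTranspose_apply, prolate_apply, prolate_apply, Complex.star_def, ← integral_conj]
    congr 1
    funext x
    simp [mul_comm]
  · have key : star v ⬝ᵥ (prolate2D M N S *ᵥ v) =
        ∫ x in S, ((Complex.normSq (∑ j, star (v j) * EE x j) : ℝ) : ℂ) := by
      have e : ∀ x : ℝ × ℝ, ((Complex.normSq (∑ j, star (v j) * EE x j) : ℝ) : ℂ) =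
          ∑ i, ∑ j, star (v i) * (EE x i * star (EE x j)) * v j := by
        intro x
        rw [← Complex.mul_conj, map_sum, Finset.sum_mul_sum]
        refine Finset.sum_congr rfl fun i _ => Finset.sum_congr rfl fun j _ => ?_
        simp; ring
      simp_rw [e]
      have hc : ∀ i j : Fin M × Fin N, Continuous fun x : ℝ × ℝ =>
          star (v i) * (EE x i * star (EE x j)) * v j := by
        intro i j
        have := EE_cont i
        have := EE_cont j
        fun_prop
      rw [integral_finsetSum _ fun i _ => int_aux
        (continuous_finsetSum _ fun j _ => hc i j) hS]
      simp only [dotProduct, Matrix.mulVec, Finset.mul_sum]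
      refine Finset.sum_congr rfl fun i _ => ?_
      rw [integral_finsetSum _ fun j _ => int_aux (hc i j) hS]
      refine Finset.sum_congr rfl fun j _ => ?_
      rw [integral_mul_const, integral_const_mul, prolate_apply]
      simp [mul_assoc]
    rw [key, integral_complex_ofReal, Complex.zero_le_real]
    exact integral_nonneg fun x => Complex.normSq_nonneg _

lemma prolate_prod {M N : ℕ} (s t : Set ℝ) (i j : Fin M × Fin N) :
    prolate2D M N (s ×ˢ t) i j =
      (∫ x in s, Complex.exp (2 * (π : ℂ) * Complex.I * ((x : ℂ) *
        (((i.1 : ℕ) - (j.1 : ℕ) : ℤ) : ℂ)))) *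
      (∫ x in t, Complex.exp (2 * (π : ℂ) * Complex.I * ((x : ℂ) *
        (((i.2 : ℕ) - (j.2 : ℕ) : ℤ) : ℂ)))) := by
  rw [← setIntegral_prod_mul]
  unfold prolate2D
  rw [MeasureTheory.Measure.volume_eq_prod]
  congr 1
  funext x
  rw [← Complex.exp_add]
  congr 1
  push_cast
  ring

lemma prolate_QQ (M N : ℕ) : prolate2D M N QQ = 1 := by
  have hz : ∀ k : ℤ, k ≠ 0 → (∫ x in Set.Icc (-(1 / 2) : ℝ) (1 / 2),
      Complex.exp (2 * (π : ℂ) * Complex.I * ((x : ℂ) * (k : ℂ)))) = 0 := by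
    intro k hk
    have := GG_ne (-(1 / 2) : ℝ) (1 / 2) (by norm_num) k hk
    rw [show 2 * π * k * (1 / 2 - -(1 / 2)) = k * (2 * π) by ring, Real.cos_int_mul_two_pi] at this
    simpa [GG] using this
  ext i j
  rw [QQ, prolate_prod, Matrix.one_apply]
  split_ifs with h
  · subst h
    simp; norm_num
  · by_cases h1 : i.1 = j.1
    · have h2 : i.2 ≠ j.2 := fun h2 => h (Prod.ext h1 h2)
      rw [hz (((i.2 : ℕ) : ℤ) - (j.2 : ℕ)), mul_zero]
      intro h3; apply h2; apply Fin.ext; omega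
    · rw [hz (((i.1 : ℕ) : ℤ) - (j.1 : ℕ)), zero_mul]
      intro h3; apply h1; apply Fin.ext; omega

lemma prolate_compl {M N : ℕ} (S : Set (ℝ × ℝ)) (hS : S ⊆ QQ) (hm : MeasurableSet S) :
    (1 - prolate2D M N S).PosSemidef := by
  have : 1 - prolate2D M N S = prolate2D M N (QQ \ S) := by
    rw [← prolate_QQ]
    ext i j
    rw [Matrix.sub_apply, prolate_apply, prolate_apply, prolate_apply, setIntegral_sdiff hm _ hS]
    have := EE_cont i
    have := EE_cont j
    exact int_aux (by fun_prop) le_rfl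
  rw [this]
  exact prolate_psd _ sdiff_subset

lemma prolate_rect {M N : ℕ} (hM : 2 ≤ M) (hN : 2 ≤ N) (a b c d : ℝ) (hab : a ≤ b) (hb : b - a ≤ 1)
    (hcd : c ≤ d) (hd : d - c ≤ 1) (hS : Set.Icc a b ×ˢ Set.Icc c d ⊆ QQ) :
    (prolate2D M N (Set.Icc a b ×ˢ Set.Icc c d)).trace.re -
      (prolate2D M N (Set.Icc a b ×ˢ Set.Icc c d) *
        prolate2D M N (Set.Icc a b ×ˢ Set.Icc c d)).trace.re ≤
      2 * (M * Real.log N + N * Real.log M) := by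
  obtain ⟨u1, u2⟩ := GG_bound a b hab hb M hM
  obtain ⟨v1, v2⟩ := GG_bound c d hcd hd N hN
  set s0 := ∑ m : Fin M, ∑ p : Fin M, GG a b ((m : ℕ) - (p : ℕ) : ℤ) with hs0
  set s1 := ∑ m : Fin N, ∑ p : Fin N, GG c d ((m : ℕ) - (p : ℕ) : ℤ) with hs1
  have p1 : 0 ≤ s1 := Finset.sum_nonneg fun _ _ => Finset.sum_nonneg fun _ _ => by
    unfold GG; positivity
  have t1 : (prolate2D M N (Set.Icc a b ×ˢ Set.Icc c d)).trace.re =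
      ((b - a) * M) * ((d - c) * N) := by
    simp only [Matrix.trace, Matrix.diag, prolate_prod]
    simp [hab, hcd]
    ring
  have t2 : (prolate2D M N (Set.Icc a b ×ˢ Set.Icc c d) *
        prolate2D M N (Set.Icc a b ×ˢ Set.Icc c d)).trace.re = s0 * s1 := by
    have hh := (prolate_psd (M := M) (N := N) _ hS).1
    have e : ∀ i j, (prolate2D M N (Set.Icc a b ×ˢ Set.Icc c d) i j *
        prolate2D M N (Set.Icc a b ×ˢ Set.Icc c d) j i).re =
        GG a b ((i.1 : ℕ) - (j.1 : ℕ) : ℤ) * GG c d ((i.2 : ℕ) - (j.2 : ℕ) : ℤ) := by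
      intro i j
      rw [← hh.apply j i, Complex.star_def, Complex.mul_conj, Complex.ofReal_re,
        Complex.normSq_eq_norm_sq, prolate_prod, norm_mul, mul_pow, GG, GG]
    simp only [Matrix.trace, Matrix.diag, Matrix.mul_apply, Complex.re_sum, e]
    rw [hs0, hs1, Finset.sum_mul_sum, Fintype.sum_prod_type]
    refine Finset.sum_congr rfl fun i _ => Finset.sum_congr rfl fun j _ => ?_
    rw [Finset.sum_mul_sum, Fintype.sum_prod_type]
  rw [t1, t2]
  have hM0 : (0 : ℝ) ≤ M := by positivity
  have hN0 : (0 : ℝ) ≤ N := by positivity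
  have lM : 0 ≤ Real.log M := Real.log_natCast_nonneg M
  have lN : 0 ≤ Real.log N := Real.log_natCast_nonneg N
  have q1 : (b - a) * M ≤ M := by nlinarith
  have q2 : s1 ≤ N := by nlinarith
  have q0 : 0 ≤ (b - a) * M := mul_nonneg (by linarith) hM0
  have r1 : (b - a) * M * ((d - c) * N - s1) ≤ M * (2 * Real.log N) :=
    mul_le_mul q1 v2 (by linarith) hM0
  have r2 : s1 * ((b - a) * M - s0) ≤ N * (2 * Real.log M) :=
    mul_le_mul q2 u2 (by linarith) hN0
  linarith

end PSD

theorem cubic_multiband_sharp_transition :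
    ∃ C : ℝ, 0 < C ∧
      ∀ (J : ℕ), 1 ≤ J → ∀ (f0 f1 W0 W1 : Fin J → ℝ),
        (∀ i, W0 i ∈ Set.Ioo (0 : ℝ) (1 / 2)) → (∀ i, W1 i ∈ Set.Ioo (0 : ℝ) (1 / 2)) →
        (∀ i, rect2 (f0 i) (f1 i) (W0 i) (W1 i) ⊆
          Set.Icc (-(1 / 2) : ℝ) (1 / 2) ×ˢ Set.Icc (-(1 / 2) : ℝ) (1 / 2)) →
        (∀ i j, i ≠ j →
          Disjoint (rect2 (f0 i) (f1 i) (W0 i) (W1 i)) (rect2 (f0 j) (f1 j) (W0 j) (W1 j))) →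
        ∀ (M N : ℕ), 2 ≤ M → 2 ≤ N →
          ∀ (hA : (prolate2D M N (⋃ i, rect2 (f0 i) (f1 i) (W0 i) (W1 i))).IsHermitian)
            (μ : Fin (M * N) → ℝ), Antitone μ →
            (∃ e : (Fin M × Fin N) ≃ Fin (M * N), hA.eigenvalues = μ ∘ e) →
            ∀ ε : ℝ, ε ∈ Set.Ioo (0 : ℝ) (1 / 2) →
              (Nat.card {p : Fin (M * N) // ε ≤ μ p ∧ μ p ≤ 1 - ε} : ℝ) ≤
                C * (J : ℝ) * ((M : ℝ) * Real.log (N : ℝ) + (N : ℝ) * Real.log (M : ℝ)) /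
                  (ε * (1 - ε)) := by
  refine ⟨2, by norm_num, ?_⟩
  intro J hJ f0 f1 W0 W1 hW0 hW1 hsub hdisj M N hM hN hA μ hμ he ε hε
  obtain ⟨e, he⟩ := he
  obtain ⟨hε0, hε1⟩ := hε
  let R : Fin J → Set (ℝ × ℝ) := fun i => rect2 (f0 i) (f1 i) (W0 i) (W1 i)
  have hRm : ∀ i, MeasurableSet (R i) := fun i => measurableSet_Icc.prod measurableSet_Icc
  have hRQ : ∀ i, R i ⊆ QQ := hsub
  have hUQ : (⋃ i, R i) ⊆ QQ := Set.iUnion_subset hRQ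
  have hsum : prolate2D M N (⋃ i, R i) = ∑ i, prolate2D M N (R i) := by
    ext k l
    rw [Matrix.sum_apply]
    simp only [prolate_apply]
    have c1 := EE_cont k
    have c2 := EE_cont l
    exact integral_iUnion_fintype hRm (fun i j hij => hdisj i j hij)
      (fun i => int_aux (by fun_prop) (hRQ i))
  have htr : (prolate2D M N (⋃ i, R i)).trace.re -
      (prolate2D M N (⋃ i, R i) * prolate2D M N (⋃ i, R i)).trace.re ≤
      J * (2 * (M * Real.log N + N * Real.log M)) := by
    rw [hsum, Finset.sum_mul_sum]
    simp only [Matrix.trace_sum, Complex.re_sum]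
    rw [← Finset.sum_sub_distrib]
    calc _ ≤ ∑ i : Fin J, 2 * (M * Real.log N + N * Real.log M) := by
          refine Finset.sum_le_sum fun i _ => ?_
          have h1 := Finset.single_le_sum (s := Finset.univ)
            (f := fun j => (prolate2D M N (R i) * prolate2D M N (R j)).trace.re)
            (fun j _ => trace_mul_nonneg_aux (prolate_psd (M := M) (N := N) _ (hRQ i))
              (prolate_psd (M := M) (N := N) _ (hRQ j)))
            (Finset.mem_univ i)
          have a0 := hW0 i
          have a1 := hW1 i
          have h2 := prolate_rect hM hN (f0 i - W0 i) (f0 i + W0 i) (f1 i - W1 i) (f1 i + W1 i)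
            (by linarith [a0.1]) (by linarith [a0.2]) (by linarith [a1.1]) (by linarith [a1.2])
            (hsub i)
          have h3 : R i = Set.Icc (f0 i - W0 i) (f0 i + W0 i) ×ˢ
            Set.Icc (f1 i - W1 i) (f1 i + W1 i) := rfl
          rw [← h3] at h2
          linarith
      _ = _ := by simp
  have hpsd := prolate_psd (M := M) (N := N) _ hUQ
  have heq : ∑ p, (μ p - μ p ^ 2) = ∑ i, (hA.eigenvalues i - hA.eigenvalues i ^ 2) := by
    rw [← e.sum_comp]
    simp [he]
  have hnn : ∀ p, 0 ≤ μ p - μ p ^ 2 := by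
    intro p
    have g0 : 0 ≤ hA.eigenvalues (e.symm p) := hpsd.eigenvalues_nonneg _
    have g1 : hA.eigenvalues (e.symm p) ≤ 1 :=
      eig_le_one_aux hA (prolate_compl _ hUQ (MeasurableSet.iUnion hRm)) _
    rw [he] at g0 g1
    simp only [Function.comp, Equiv.apply_symm_apply] at g0 g1
    nlinarith
  have hcard : (Nat.card {p : Fin (M * N) // ε ≤ μ p ∧ μ p ≤ 1 - ε} : ℝ) * (ε * (1 - ε)) ≤
      ∑ p, (μ p - μ p ^ 2) := by
    classical
    rw [Nat.card_eq_fintype_card, Fintype.card_subtype]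
    calc _ = ∑ p ∈ Finset.univ.filter (fun p => ε ≤ μ p ∧ μ p ≤ 1 - ε), ε * (1 - ε) := by
          simp
      _ ≤ ∑ p ∈ Finset.univ.filter (fun p => ε ≤ μ p ∧ μ p ≤ 1 - ε), (μ p - μ p ^ 2) := by
          refine Finset.sum_le_sum fun p hp => ?_
          obtain ⟨g1, g2⟩ := (Finset.mem_filter.mp hp).2
          nlinarith
      _ ≤ _ := Finset.sum_le_sum_of_subset_of_nonneg (Finset.filter_subset _ _)
          (fun p _ _ => hnn p)
  rw [le_div_iff₀ (mul_pos hε0 (by linarith))]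
  have hfin := (hcard.trans_eq (heq.trans (sum_eigs_aux hA))).trans htr
  linarith
end

section
/- Let 𝕎 = ⋃_{i=0}^{J−1} 𝕎_i ⊆ [−1/2, 1/2]² be a cubic multiband set consisting of J ≥ 1 pairwise disjoint closed rectangles, with total Lebesgue measure ‖𝕎‖, and fix ε ∈ (0, 1/‖𝕎‖ − 1). Then there exist constants C̃₃ > 0, C̃₄ > 0 and integers M̃₂, Ñ₂ ≥ 1 (depending only on 𝕎 and ε) such that for all M ≥ M̃₂, N ≥ Ñ₂ and every index p with ⌈MN·‖𝕎‖·(1+ε)⌉ ≤ p ≤ MN−1, the p-th eigenvalue satisfies λ_{(M,N),𝕎}^{(p)} ≤ C̃₃·e^{−C̃₄·min(M,N)}. -/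
open MeasureTheory Matrix Real Set

/-- The character `x ↦ exp(2πi x)`. -/
noncomputable def ee (x : ℝ) : ℂ := Complex.exp (2 * (Real.pi : ℂ) * Complex.I * (x : ℂ))

theorem ee_add (x y : ℝ) : ee (x + y) = ee x * ee y := by
  unfold ee; rw [← Complex.exp_add]; congr 1; push_cast; ring

theorem ee_int (n : ℤ) : ee (n : ℝ) = 1 := by
  unfold ee
  rw [Complex.exp_eq_one_iff]
  exact ⟨n, by push_cast; ring⟩

theorem ee_zero : ee 0 = 1 := by simpa using ee_int 0

theorem ee_pow (x : ℝ) (n : ℕ) : ee x ^ n = ee (x * n) := by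
  unfold ee; rw [← Complex.exp_nat_mul]; congr 1; push_cast; ring

theorem norm_ee (x : ℝ) : ‖ee x‖ = 1 := by
  unfold ee
  rw [Complex.norm_exp]
  simp

theorem continuous_ee : Continuous ee := by unfold ee; fun_prop

theorem conj_ee (x : ℝ) : (starRingEnd ℂ) (ee x) = ee (-x) := by
  unfold ee; rw [← Complex.exp_conj]; congr 1
  simp only [map_mul, Complex.conj_ofReal, Complex.conj_I, Complex.ofReal_neg, map_ofNat]; ring

theorem ee_eq_one {x : ℝ} (h : ee x = 1) : ∃ n : ℤ, x = n := by
  unfold ee at h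
  rw [Complex.exp_eq_one_iff] at h
  obtain ⟨n, hn⟩ := h
  refine ⟨n, ?_⟩
  have h2 : (2 * (Real.pi : ℂ) * Complex.I) ≠ 0 := by
    simp [Real.pi_ne_zero]
  have : (x : ℂ) = n := by
    apply mul_left_cancel₀ h2
    rw [hn]; ring
  exact_mod_cast this

theorem sum_ee (K : ℕ) (hK : 0 < K) (a s : ℕ) (ha : a < K) (hs : s < K) :
    ∑ j ∈ Finset.range K, ee (((a : ℝ) - s) / K) ^ j = if s = a then (K : ℂ) else 0 := by
  have hK' : (K : ℝ) ≠ 0 := by positivity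
  split_ifs with h
  · subst h; simp [ee_zero]
  · have h1 : ee (((a : ℝ) - s) / K) ≠ 1 := by
      intro hh
      obtain ⟨n, hn⟩ := ee_eq_one hh
      rw [div_eq_iff hK'] at hn
      have hn' : (a : ℤ) - s = n * K := by exact_mod_cast hn
      have : n = 0 := by
        by_contra hne
        have h3 : (1 : ℤ) ≤ |n| := Int.one_le_abs hne
        have h4 : |(a : ℤ) - s| = |n| * K := by rw [hn', abs_mul, Nat.abs_cast]
        have h5 : |(a : ℤ) - s| < K := by rw [abs_lt]; constructor <;> omega
        nlinarith
      subst this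
      omega
    have h2 := mul_geom_sum (ee (((a : ℝ) - s) / K)) K
    rw [ee_pow, div_mul_cancel₀ _ hK'] at h2
    have h3 : ee ((a : ℝ) - s) = 1 := by
      have := ee_int ((a : ℤ) - s); push_cast at this; exact this
    rw [h3, sub_self] at h2
    exact (mul_eq_zero.mp h2).resolve_left (sub_ne_zero.mpr h1)

/-- The localized interpolation kernel. -/
noncomputable def dker (K L : ℕ) (f : ℝ) (j : ℕ) : ℂ :=
  ((1 + ee ((j : ℝ) / K - f)) / 2) ^ L *
    ((1 / (K : ℂ)) * ∑ s ∈ Finset.range K, ee ((f - (j : ℝ) / K) * s))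

theorem continuous_dker (K L : ℕ) (j : ℕ) : Continuous (fun f => dker K L f j) := by
  unfold dker
  have := continuous_ee
  fun_prop

theorem mono_ident (K : ℕ) (hK : 0 < K) (f : ℝ) (l m : ℕ) (h : l + m < K) :
    ∑ j ∈ Finset.range K, ee ((j : ℝ) / K - f) ^ l *
      ((1 / (K : ℂ)) * ∑ s ∈ Finset.range K, ee ((f - (j : ℝ) / K) * s)) * ee ((j : ℝ) / K * m)
      = ee (f * m) := by
  have hKC : (K : ℂ) ≠ 0 := by exact_mod_cast hK.ne'
  have key : ∀ j s : ℕ, ee ((j : ℝ) / K - f) ^ l * ee ((f - (j : ℝ) / K) * s) *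
      ee ((j : ℝ) / K * m) = ee (f * ((s : ℝ) - l)) * ee ((((l + m : ℕ) : ℝ) - s) / K) ^ j := by
    intro j s
    rw [ee_pow, ee_pow, ← ee_add, ← ee_add, ← ee_add]
    congr 1; push_cast; ring
  calc _ = ∑ j ∈ Finset.range K, ∑ s ∈ Finset.range K, (1 / (K : ℂ)) *
        (ee (f * ((s : ℝ) - l)) * ee ((((l + m : ℕ) : ℝ) - s) / K) ^ j) := by
        refine Finset.sum_congr rfl fun j _ => ?_
        rw [Finset.mul_sum, Finset.mul_sum, Finset.sum_mul]
        refine Finset.sum_congr rfl fun s _ => ?_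
        rw [← key]; ring
    _ = ∑ s ∈ Finset.range K, (1 / (K : ℂ)) * (ee (f * ((s : ℝ) - l)) *
          (if s = l + m then (K : ℂ) else 0)) := by
        rw [Finset.sum_comm]
        refine Finset.sum_congr rfl fun s hs => ?_
        rw [← Finset.mul_sum, ← Finset.mul_sum, sum_ee K hK (l + m) s h (Finset.mem_range.mp hs)]
    _ = ee (f * m) := by
        rw [Finset.sum_eq_single (l + m)]
        · simp; field_simp
        · intro b _ hb; simp [hb]
        · intro hh; exact absurd (Finset.mem_range.mpr h) hh

theorem dker_ident (K L : ℕ) (hK : 0 < K) (f : ℝ) (m : ℕ) (h : L + m < K) :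
    ∑ j ∈ Finset.range K, dker K L f j * ee ((j : ℝ) / K * m) = ee (f * m) := by
  have hexp : ∀ x : ℂ, ((1 + x) / 2) ^ L =
      ∑ l ∈ Finset.range (L + 1), ((L.choose l : ℂ) / 2 ^ L) * x ^ l := by
    intro x
    rw [div_pow, add_comm, add_pow, Finset.sum_div]
    refine Finset.sum_congr rfl fun l _ => ?_
    simp; ring
  have h1 : ∑ l ∈ Finset.range (L + 1), ((L.choose l : ℂ) / 2 ^ L) = 1 := by
    have := hexp 1
    norm_num at this
    exact this.symm
  calc _ = ∑ l ∈ Finset.range (L + 1), ((L.choose l : ℂ) / 2 ^ L) *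
      ∑ j ∈ Finset.range K, ee ((j : ℝ) / K - f) ^ l *
      ((1 / (K : ℂ)) * ∑ s ∈ Finset.range K, ee ((f - (j : ℝ) / K) * s)) * ee ((j : ℝ) / K * m) := by
        conv_rhs => enter [2, l]; rw [Finset.mul_sum]
        rw [Finset.sum_comm]
        refine Finset.sum_congr rfl fun j _ => ?_
        unfold dker
        rw [hexp, Finset.sum_mul, Finset.sum_mul]
        refine Finset.sum_congr rfl fun l _ => ?_
        ring
    _ = ∑ l ∈ Finset.range (L + 1), ((L.choose l : ℂ) / 2 ^ L) * ee (f * m) := by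
        refine Finset.sum_congr rfl fun l hl => ?_
        rw [mono_ident K hK f l m]
        have := Finset.mem_range.mp hl
        omega
    _ = ee (f * m) := by rw [← Finset.sum_mul, h1, one_mul]

theorem norm_one_add_ee (t δ : ℝ) (hδ : 0 < δ) (h : ∀ n : ℤ, δ ≤ |t - n|) :
    ‖(1 + ee t) / 2‖ ≤ Real.cos (Real.pi * δ) := by
  set u := t - round t with hu
  have h1 : |u| ≤ 1 / 2 := abs_sub_round t
  have h2 : δ ≤ |u| := h _
  have h3 : ee t = ee u := by
    have : t = u + (round t : ℤ) := by rw [hu]; ring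
    conv_lhs => rw [this]
    rw [ee_add, ee_int, mul_one]
  have h4 : (1 + ee u) / 2 = ee (u / 2) * (Real.cos (Real.pi * u) : ℂ) := by
    rw [Complex.ofReal_cos, Complex.cos]
    unfold ee
    rw [← mul_div_assoc, mul_add, ← Complex.exp_add, ← Complex.exp_add, add_comm,
      ← Complex.exp_zero]
    congr 3 <;> · push_cast; ring
  rw [h3, h4, norm_mul, norm_ee, one_mul, Complex.norm_real, Real.norm_eq_abs]
  have hp := Real.pi_pos
  rw [← Real.cos_abs, abs_mul, abs_of_pos hp, abs_of_nonneg]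
  · apply Real.cos_le_cos_of_nonneg_of_le_pi
    · positivity
    · nlinarith
    · nlinarith
  · apply Real.cos_nonneg_of_mem_Icc
    constructor
    · have : 0 ≤ Real.pi * |u| := by positivity
      linarith
    · nlinarith

theorem one_dim (M L : ℕ) (hM : 0 < M) (a W δ : ℝ) (hW : 0 < W) (hδ : 0 < δ) (hδ2 : δ ≤ 1 / 2) :
    ∃ S : Finset ℕ, (S.card : ℝ) ≤ 2 * ((M + L : ℕ) : ℝ) * (W + δ) + 1 ∧
      ∃ r : ℝ → Fin M → ℂ, (∀ m, Continuous fun f => r f m) ∧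
        (∀ f ∈ Set.Icc (a - W) (a + W), ∀ m,
          ‖r f m‖ ≤ ((M + L : ℕ) : ℝ) * Real.cos (Real.pi * δ) ^ L) ∧
        ∀ f, ∀ m : Fin M, ee (f * (m : ℕ)) =
          (∑ j ∈ S, dker (M + L) L f j * ee ((j : ℝ) / ((M + L : ℕ) : ℝ) * (m : ℕ))) + r f m := by
  classical
  set K := M + L with hKdef
  have hK : 0 < K := by omega
  have hKR : (0 : ℝ) < K := by exact_mod_cast hK
  set Z : Finset ℤ := Finset.Icc ⌈(K : ℝ) * (a - W - δ)⌉ ⌊(K : ℝ) * (a + W + δ)⌋ with hZ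
  set S : Finset ℕ := Z.image (fun z => (z % (K : ℤ)).toNat) with hS
  have hSK : S ⊆ Finset.range K := by
    intro j hj
    rw [hS, Finset.mem_image] at hj
    obtain ⟨z, -, rfl⟩ := hj
    have h1 := Int.emod_nonneg z (b := (K : ℤ)) (by omega)
    have h2 := Int.emod_lt_of_pos z (b := (K : ℤ)) (by omega)
    rw [Finset.mem_range]; omega
  refine ⟨S, ?_, fun f m => ∑ j ∈ Finset.range K \ S, dker K L f j * ee ((j : ℝ) / (K : ℝ) * (m : ℕ)),
    ?_, ?_, ?_⟩
  · have h1 : (S.card : ℝ) ≤ Z.card := by exact_mod_cast Finset.card_image_le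
    refine h1.trans ?_
    rw [hZ, Int.card_Icc]
    have h2 := Int.le_ceil ((K : ℝ) * (a - W - δ))
    have h3 := Int.floor_le ((K : ℝ) * (a + W + δ))
    have h4 : (((⌊(K : ℝ) * (a + W + δ)⌋ + 1 - ⌈(K : ℝ) * (a - W - δ)⌉).toNat : ℤ) : ℝ)
        ≤ 2 * (K : ℝ) * (W + δ) + 1 := by
      rw [Int.toNat_eq_max]
      push_cast
      apply max_le
      · nlinarith
      · positivity
    exact_mod_cast h4
  · intro m
    exact continuous_finsetSum _ fun j _ => (continuous_dker K L j).mul continuous_const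
  · intro f hf m
    have hb : ∀ j ∈ Finset.range K \ S, ‖dker K L f j * ee ((j : ℝ) / (K : ℝ) * (m : ℕ))‖ ≤
        Real.cos (Real.pi * δ) ^ L := by
      intro j hj
      rw [Finset.mem_sdiff, Finset.mem_range] at hj
      rw [norm_mul, norm_ee, mul_one]
      unfold dker
      rw [norm_mul, norm_pow]
      have h1 : ‖(1 / (K : ℂ)) * ∑ s ∈ Finset.range K, ee ((f - (j : ℝ) / K) * s)‖ ≤ 1 := by
        rw [norm_mul, norm_div, norm_one, Complex.norm_natCast, one_div]
        have : ‖∑ s ∈ Finset.range K, ee ((f - (j : ℝ) / K) * s)‖ ≤ K := by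
          refine (norm_sum_le _ _).trans ?_
          simp [norm_ee]
        rw [inv_mul_le_iff₀ hKR, mul_one]; exact this
      have h2 : ‖(1 + ee ((j : ℝ) / K - f)) / 2‖ ≤ Real.cos (Real.pi * δ) := by
        apply norm_one_add_ee _ _ hδ
        intro n
        by_contra hlt
        rw [not_le, abs_lt] at hlt
        apply hj.2
        rw [hS, Finset.mem_image]
        refine ⟨(j : ℤ) - n * K, ?_, ?_⟩
        · rw [hZ, Finset.mem_Icc, Int.ceil_le, Int.le_floor]
          have hjK : (j : ℝ) = K * ((j : ℝ) / K) := by field_simp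
          push_cast
          rw [hjK]
          have := hf.1
          have := hf.2
          constructor
          · have : a - W - δ ≤ (j : ℝ) / K - n := by linarith
            nlinarith
          · have : (j : ℝ) / K - n ≤ a + W + δ := by linarith
            nlinarith
        · rw [Int.sub_mul_emod_self_right, Int.emod_eq_of_lt (by omega) (by omega)]
          simp
      calc _ ≤ Real.cos (Real.pi * δ) ^ L * 1 := by
            apply mul_le_mul _ h1 (norm_nonneg _)
            · exact pow_nonneg ((norm_nonneg _).trans h2) _
            · exact pow_le_pow_left₀ (norm_nonneg _) h2 _
        _ = _ := mul_one _
    have hc : 0 ≤ Real.cos (Real.pi * δ) ^ L := by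
      apply pow_nonneg
      have hp := Real.pi_pos
      apply Real.cos_nonneg_of_mem_Icc
      constructor <;> nlinarith
    refine (norm_sum_le_of_le _ hb).trans ?_
    rw [Finset.sum_const, nsmul_eq_mul]
    apply mul_le_mul_of_nonneg_right _ hc
    have : (Finset.range K \ S).card ≤ K := by
      simpa using Finset.card_le_card (Finset.sdiff_subset (s := Finset.range K) (t := S))
    exact_mod_cast this
  · intro f m
    rw [← dker_ident K L hK f m (by omega), add_comm]
    exact (Finset.sum_sdiff hSK).symm

theorem integral_ee (k : ℤ) : ∫ g in (-(1 / 2) : ℝ)..(1 / 2), ee (g * k) = if k = 0 then 1 else 0 := by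
  split_ifs with h
  · subst h; simp [ee_zero]; norm_num
  · have hc : (2 * (Real.pi : ℂ) * Complex.I * k) ≠ 0 := by
      simp [Real.pi_ne_zero, h]
    have h1 : ∀ g : ℝ, ee (g * k) = Complex.exp ((2 * (Real.pi : ℂ) * Complex.I * k) * g) := by
      intro g; unfold ee; congr 1; push_cast; ring
    simp_rw [h1]
    rw [integral_exp_mul_complex hc]
    have h2 : Complex.exp ((2 * (Real.pi : ℂ) * Complex.I * k) * ((1 / 2 : ℝ) : ℂ)) =
        Complex.exp ((2 * (Real.pi : ℂ) * Complex.I * k) * ((-(1 / 2) : ℝ) : ℂ)) := by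
      rw [Complex.exp_eq_exp_iff_exists_int]
      exact ⟨k, by push_cast; ring⟩
    rw [h2, sub_self, zero_div]

theorem bessel_ee (N : ℕ) (a b : ℝ) (ha : -(1 / 2) ≤ a) (hb : b ≤ 1 / 2) (c : Fin N → ℂ) :
    ∫ g in Set.Icc a b, ‖∑ n, c n * ee (g * (n : ℕ))‖ ^ 2 ≤ 1 * ∑ n, ‖c n‖ ^ 2 := by
  have hce := continuous_ee
  have hcont : Continuous fun g : ℝ => ‖∑ n, c n * ee (g * ((n : ℕ) : ℝ))‖ ^ 2 := by fun_prop
  have h1 : ∫ g in Set.Icc a b, ‖∑ n, c n * ee (g * (n : ℕ))‖ ^ 2 ≤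
      ∫ g in Set.Icc (-(1 / 2) : ℝ) (1 / 2), ‖∑ n, c n * ee (g * (n : ℕ))‖ ^ 2 := by
    apply setIntegral_mono_set
    · exact hcont.continuousOn.integrableOn_compact isCompact_Icc
    · exact Filter.Eventually.of_forall fun g => by positivity
    · exact (Set.Icc_subset_Icc ha hb).eventuallyLE
  refine h1.trans ?_
  rw [integral_Icc_eq_integral_Ioc, ← intervalIntegral.integral_of_le (by norm_num), one_mul]
  apply le_of_eq
  have h2 : ∀ g : ℝ, ((‖∑ n, c n * ee (g * ((n : ℕ) : ℝ))‖ ^ 2 : ℝ) : ℂ) =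
      ∑ n, ∑ k, c n * (starRingEnd ℂ) (c k) * ee (g * (((n : ℕ) : ℤ) - ((k : ℕ) : ℤ) : ℤ)) := by
    intro g
    push_cast
    rw [← Complex.mul_conj', map_sum, Finset.sum_mul_sum]
    refine Finset.sum_congr rfl fun n _ => Finset.sum_congr rfl fun k _ => ?_
    rw [map_mul, conj_ee]
    have : g * (((n : ℕ) : ℝ) - ((k : ℕ) : ℝ)) = g * (n : ℕ) + -(g * (k : ℕ)) := by ring
    rw [this, ee_add]; ring
  have h3 : ((∫ g in (-(1 / 2) : ℝ)..(1 / 2), ‖∑ n, c n * ee (g * (n : ℕ))‖ ^ 2 : ℝ) : ℂ) =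
      ((∑ n, ‖c n‖ ^ 2 : ℝ) : ℂ) := by
    rw [← intervalIntegral.integral_ofReal]
    simp_rw [h2]
    rw [intervalIntegral.integral_finsetSum]
    · rw [Complex.ofReal_sum]
      refine Finset.sum_congr rfl fun n _ => ?_
      rw [intervalIntegral.integral_finsetSum]
      · simp_rw [intervalIntegral.integral_const_mul, integral_ee]
        rw [Finset.sum_eq_single n]
        · simp [Complex.mul_conj']
        · intro k _ hk
          rw [if_neg, mul_zero]
          intro hh
          apply hk
          ext; omega
        · simp
      · intro k _
        apply Continuous.intervalIntegrable
        fun_prop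
    · intro n _
      apply Continuous.intervalIntegrable
      fun_prop
  exact_mod_cast h3

theorem bessel_small (M : ℕ) (a b ρ : ℝ) (hab : a ≤ b) (hab1 : b - a ≤ 1) (r : ℝ → Fin M → ℂ)
    (hr : ∀ m, Continuous fun f => r f m) (hb : ∀ f ∈ Set.Icc a b, ∀ m, ‖r f m‖ ≤ ρ)
    (c : Fin M → ℂ) :
    ∫ f in Set.Icc a b, ‖∑ m, c m * r f m‖ ^ 2 ≤ (M * ρ ^ 2) * ∑ m, ‖c m‖ ^ 2 := by
  have hpt : ∀ f ∈ Set.Icc a b, ‖∑ m, c m * r f m‖ ^ 2 ≤ (M * ρ ^ 2) * ∑ m, ‖c m‖ ^ 2 := by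
    intro f hf
    have h1 : ‖∑ m, c m * r f m‖ ≤ ∑ m, ‖c m‖ * ‖r f m‖ :=
      (norm_sum_le _ _).trans_eq (by simp)
    have h2 : (∑ m, ‖c m‖ * ‖r f m‖) ^ 2 ≤ (∑ m, ‖c m‖ ^ 2) * ∑ m, ‖r f m‖ ^ 2 :=
      Finset.sum_mul_sq_le_sq_mul_sq _ _ _
    have h3 : ∑ m, ‖r f m‖ ^ 2 ≤ M * ρ ^ 2 := by
      calc _ ≤ ∑ _m : Fin M, ρ ^ 2 :=
            Finset.sum_le_sum fun m _ => pow_le_pow_left₀ (norm_nonneg _) (hb f hf m) 2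
        _ = _ := by simp
    calc _ ≤ (∑ m, ‖c m‖ * ‖r f m‖) ^ 2 := pow_le_pow_left₀ (norm_nonneg _) h1 2
      _ ≤ _ := h2
      _ ≤ (∑ m, ‖c m‖ ^ 2) * (M * ρ ^ 2) := mul_le_mul_of_nonneg_left h3 (by positivity)
      _ = _ := mul_comm _ _
  have hcont : Continuous fun f : ℝ => ‖∑ m, c m * r f m‖ ^ 2 := by fun_prop
  calc _ ≤ ∫ f in Set.Icc a b, (M * ρ ^ 2) * ∑ m, ‖c m‖ ^ 2 := by
        apply setIntegral_mono_on
        · exact hcont.continuousOn.integrableOn_compact isCompact_Icc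
        · exact continuous_const.continuousOn.integrableOn_compact isCompact_Icc
        · exact measurableSet_Icc
        · exact hpt
    _ = (b - a) * ((M * ρ ^ 2) * ∑ m, ‖c m‖ ^ 2) := by
        rw [setIntegral_const]
        simp [Measure.real, hab]
    _ ≤ 1 * ((M * ρ ^ 2) * ∑ m, ‖c m‖ ^ 2) := by
        apply mul_le_mul_of_nonneg_right hab1; positivity
    _ = _ := one_mul _

theorem bessel_tensor (M N : ℕ) (a b a' b' A B : ℝ) (hB : 0 ≤ B)
    (α : ℝ → Fin M → ℂ) (β : ℝ → Fin N → ℂ)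
    (hα : ∀ m, Continuous fun f => α f m) (hβ : ∀ m, Continuous fun f => β f m)
    (hA : ∀ c : Fin M → ℂ, ∫ f in Set.Icc a b, ‖∑ m, c m * α f m‖ ^ 2 ≤ A * ∑ m, ‖c m‖ ^ 2)
    (hBB : ∀ c : Fin N → ℂ, ∫ f in Set.Icc a' b', ‖∑ m, c m * β f m‖ ^ 2 ≤ B * ∑ m, ‖c m‖ ^ 2)
    (w : Fin M × Fin N → ℂ) :
    ∫ x in Set.Icc a b ×ˢ Set.Icc a' b', ‖∑ i, w i * (α x.1 i.1 * β x.2 i.2)‖ ^ 2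
      ≤ (A * B) * ∑ i, ‖w i‖ ^ 2 := by
  have hα' : ∀ m, Continuous fun x : ℝ × ℝ => α x.1 m := fun m => (hα m).comp continuous_fst
  have hβ' : ∀ m, Continuous fun x : ℝ × ℝ => β x.2 m := fun m => (hβ m).comp continuous_snd
  have hcont : Continuous fun x : ℝ × ℝ => ‖∑ i, w i * (α x.1 i.1 * β x.2 i.2)‖ ^ 2 := by
    fun_prop
  have hint : IntegrableOn (fun x : ℝ × ℝ => ‖∑ i, w i * (α x.1 i.1 * β x.2 i.2)‖ ^ 2)
      (Set.Icc a b ×ˢ Set.Icc a' b') (volume.prod volume) :=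
    hcont.continuousOn.integrableOn_compact (isCompact_Icc.prod isCompact_Icc)
  have hre : ∀ f g, ∑ i : Fin M × Fin N, w i * (α f i.1 * β g i.2) =
      ∑ n, (∑ m, w (m, n) * α f m) * β g n := by
    intro f g
    rw [Fintype.sum_prod_type_right]
    refine Finset.sum_congr rfl fun n _ => ?_
    rw [Finset.sum_mul]
    refine Finset.sum_congr rfl fun m _ => ?_
    ring
  have hint2 : Integrable (fun f => ∫ g in Set.Icc a' b', ‖∑ i, w i * (α f i.1 * β g i.2)‖ ^ 2)
      (volume.restrict (Set.Icc a b)) := by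
    rw [IntegrableOn, ← Measure.prod_restrict] at hint
    exact hint.integral_prod_left
  rw [Measure.volume_eq_prod, setIntegral_prod _ hint]
  calc _ ≤ ∫ f in Set.Icc a b, B * ∑ n, ‖∑ m, w (m, n) * α f m‖ ^ 2 := by
        apply integral_mono hint2
        · have : Continuous fun f => B * ∑ n, ‖∑ m, w (m, n) * α f m‖ ^ 2 := by fun_prop
          exact this.continuousOn.integrableOn_compact isCompact_Icc
        · intro f
          simp only [hre]
          exact hBB _
    _ = B * ∑ n, ∫ f in Set.Icc a b, ‖∑ m, w (m, n) * α f m‖ ^ 2 := by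
        rw [integral_const_mul, integral_finsetSum]
        intro n _
        have : Continuous fun f => ‖∑ m, w (m, n) * α f m‖ ^ 2 := by fun_prop
        exact this.continuousOn.integrableOn_compact isCompact_Icc
    _ ≤ B * ∑ n, A * ∑ m, ‖w (m, n)‖ ^ 2 :=
        mul_le_mul_of_nonneg_left (Finset.sum_le_sum fun n _ => hA _) hB
    _ = _ := by
        rw [← Finset.mul_sum, Fintype.sum_prod_type_right]; ring

theorem rect_bound (M N : ℕ) (a b a' b' ρ ρ' : ℝ) (hab : a ≤ b) (hab' : a' ≤ b')
    (ha : -(1 / 2) ≤ a) (hb : b ≤ 1 / 2) (ha' : -(1 / 2) ≤ a') (hb' : b' ≤ 1 / 2)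
    (r : ℝ → Fin M → ℂ) (r' : ℝ → Fin N → ℂ)
    (hr : ∀ m, Continuous fun f => r f m) (hr' : ∀ m, Continuous fun f => r' f m)
    (hρ : ∀ f ∈ Set.Icc a b, ∀ m, ‖r f m‖ ≤ ρ) (hρ' : ∀ f ∈ Set.Icc a' b', ∀ m, ‖r' f m‖ ≤ ρ')
    (w : Fin M × Fin N → ℂ)
    (h0 : ∀ f g, ∑ i, w i * ((ee (f * (i.1 : ℕ)) - r f i.1) * (ee (g * (i.2 : ℕ)) - r' g i.2)) = 0) :
    ∫ x in Set.Icc a b ×ˢ Set.Icc a' b', ‖∑ i, w i * (ee (x.1 * (i.1 : ℕ)) * ee (x.2 * (i.2 : ℕ)))‖ ^ 2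
      ≤ 3 * (M * ρ ^ 2 + N * ρ' ^ 2 + (M * ρ ^ 2) * (N * ρ' ^ 2)) * ∑ i, ‖w i‖ ^ 2 := by
  have hce := continuous_ee
  have hr1 : ∀ m, Continuous fun x : ℝ × ℝ => r x.1 m := fun m => (hr m).comp continuous_fst
  have hr2 : ∀ m, Continuous fun x : ℝ × ℝ => r' x.2 m := fun m => (hr' m).comp continuous_snd
  have hE : ∀ K : ℕ, ∀ m : Fin K, Continuous fun f : ℝ => ee (f * ((m : ℕ) : ℝ)) := by
    intro K m; fun_prop
  have b1 := bessel_ee M a b ha hb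
  have b1' := bessel_ee N a' b' ha' hb'
  have b2 := bessel_small M a b ρ hab (by linarith) r hr hρ
  have b2' := bessel_small N a' b' ρ' hab' (by linarith) r' hr' hρ'
  have t1 := bessel_tensor M N a b a' b' _ _ zero_le_one r (fun g (n : Fin N) => ee (g * (n : ℕ)))
    hr (hE N) b2 b1' w
  have t2 := bessel_tensor M N a b a' b' _ _ (by positivity) (fun g (n : Fin M) => ee (g * (n : ℕ))) r'
    (hE M) hr' b1 b2' w
  have t3 := bessel_tensor M N a b a' b' _ _ (by positivity) r r' hr hr' b2 b2' w
  have hpt : ∀ x : ℝ × ℝ, ‖∑ i, w i * (ee (x.1 * (i.1 : ℕ)) * ee (x.2 * (i.2 : ℕ)))‖ ^ 2 ≤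
      3 * (‖∑ i, w i * (r x.1 i.1 * ee (x.2 * (i.2 : ℕ)))‖ ^ 2 +
        ‖∑ i, w i * (ee (x.1 * (i.1 : ℕ)) * r' x.2 i.2)‖ ^ 2 +
        ‖∑ i, w i * (r x.1 i.1 * r' x.2 i.2)‖ ^ 2) := by
    intro x
    have hs : ∑ i, w i * (ee (x.1 * (i.1 : ℕ)) * ee (x.2 * (i.2 : ℕ))) =
        ∑ i, w i * (r x.1 i.1 * ee (x.2 * (i.2 : ℕ))) +
        ∑ i, w i * (ee (x.1 * (i.1 : ℕ)) * r' x.2 i.2) - ∑ i, w i * (r x.1 i.1 * r' x.2 i.2) := by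
      rw [← sub_eq_zero, ← h0 x.1 x.2, ← Finset.sum_add_distrib, ← Finset.sum_sub_distrib,
        ← Finset.sum_sub_distrib]
      refine Finset.sum_congr rfl fun i _ => ?_
      ring
    rw [hs]
    set p := ∑ i, w i * (r x.1 i.1 * ee (x.2 * (i.2 : ℕ)))
    set q := ∑ i, w i * (ee (x.1 * (i.1 : ℕ)) * r' x.2 i.2)
    set s := ∑ i, w i * (r x.1 i.1 * r' x.2 i.2)
    have h1 : ‖p + q - s‖ ≤ ‖p‖ + ‖q‖ + ‖s‖ :=
      (norm_sub_le _ _).trans (add_le_add_left (norm_add_le _ _) _)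
    have h2 := pow_le_pow_left₀ (norm_nonneg _) h1 2
    nlinarith [sq_nonneg (‖p‖ - ‖q‖), sq_nonneg (‖p‖ - ‖s‖), sq_nonneg (‖q‖ - ‖s‖)]
  have hcpt : IsCompact (Set.Icc a b ×ˢ Set.Icc a' b') := isCompact_Icc.prod isCompact_Icc
  have i0 : IntegrableOn (fun x : ℝ × ℝ => ‖∑ i : Fin M × Fin N, w i * (ee (x.1 * ((i.1 : ℕ) : ℝ)) * ee (x.2 * ((i.2 : ℕ) : ℝ)))‖ ^ 2)
      (Set.Icc a b ×ˢ Set.Icc a' b') :=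
    ContinuousOn.integrableOn_compact hcpt (Continuous.continuousOn (by fun_prop))
  have i1 : IntegrableOn (fun x : ℝ × ℝ => ‖∑ i : Fin M × Fin N, w i * (r x.1 i.1 * ee (x.2 * ((i.2 : ℕ) : ℝ)))‖ ^ 2)
      (Set.Icc a b ×ˢ Set.Icc a' b') :=
    ContinuousOn.integrableOn_compact hcpt (Continuous.continuousOn (by fun_prop))
  have i2 : IntegrableOn (fun x : ℝ × ℝ => ‖∑ i : Fin M × Fin N, w i * (ee (x.1 * ((i.1 : ℕ) : ℝ)) * r' x.2 i.2)‖ ^ 2)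
      (Set.Icc a b ×ˢ Set.Icc a' b') :=
    ContinuousOn.integrableOn_compact hcpt (Continuous.continuousOn (by fun_prop))
  have i3 : IntegrableOn (fun x : ℝ × ℝ => ‖∑ i : Fin M × Fin N, w i * (r x.1 i.1 * r' x.2 i.2)‖ ^ 2)
      (Set.Icc a b ×ˢ Set.Icc a' b') :=
    ContinuousOn.integrableOn_compact hcpt (Continuous.continuousOn (by fun_prop))
  have hle := integral_mono i0 (((i1.add i2).add i3).const_mul 3) hpt
  refine hle.trans ?_
  rw [integral_const_mul]
  have hadd := integral_add (i1.add i2) i3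
  have hadd2 := integral_add i1 i2
  simp only [Pi.add_apply] at hadd hadd2
  erw [hadd, hadd2]
  linarith

theorem eig_bound {n : Type*} [Fintype n] [DecidableEq n] (A : Matrix n n ℂ) (hA : A.IsHermitian)
    {d : ℕ} (μ : Fin d → ℝ) (hμ : Antitone μ) (e : n ≃ Fin d) (he : hA.eigenvalues = μ ∘ e)
    (p : Fin d) {ι : Type*} [Fintype ι] (φ : ι → n → ℂ) (hcard : Fintype.card ι ≤ (p : ℕ)) (b : ℝ)
    (hb : ∀ v : n → ℂ, (∀ i, φ i ⬝ᵥ v = 0) → (star v ⬝ᵥ A *ᵥ v).re ≤ b * ∑ i, ‖v i‖ ^ 2) :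
    μ p ≤ b := by
  classical
  let T := {i : n // e i ≤ p}
  have hT : Fintype.card T = p + 1 := by
    have : Fintype.card T = Fintype.card {x : Fin d // x ≤ p} :=
      Fintype.card_congr (e.subtypeEquiv (by intro a; rfl))
    rw [this, Fintype.card_subtype]
    have : (Finset.univ.filter fun x : Fin d => x ≤ p) = Finset.Iic p := by ext; simp
    rw [this]; simp
  let u : n → n → ℂ := fun i => (hA.eigenvectorBasis i : n → ℂ)
  have huA : ∀ i, A *ᵥ u i = (hA.eigenvalues i : ℂ) • u i := by
    intro i
    have := hA.mulVec_eigenvectorBasis i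
    exact this
  have huo : ∀ i j, star (u i) ⬝ᵥ u j = if i = j then 1 else 0 := by
    intro i j
    have := orthonormal_iff_ite.mp hA.eigenvectorBasis.orthonormal i j
    rw [EuclideanSpace.inner_eq_star_dotProduct] at this
    rw [dotProduct_comm]
    exact this
  let F : (T → ℂ) →ₗ[ℂ] (ι → ℂ) :=
    Matrix.mulVecLin (Matrix.of fun (k : ι) (t : T) => φ k ⬝ᵥ u t.1)
  have hker : F.ker ≠ ⊥ := by
    apply LinearMap.ker_ne_bot_of_finrank_lt
    rw [Module.finrank_fintype_fun_eq_card, Module.finrank_fintype_fun_eq_card, hT]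
    omega
  obtain ⟨c, hc, hc0⟩ := (Submodule.ne_bot_iff _).mp hker
  let v : n → ℂ := ∑ t : T, c t • u t.1
  have hv : ∀ i, φ i ⬝ᵥ v = 0 := by
    intro i
    have h1 : F c i = 0 := by rw [LinearMap.mem_ker.mp hc]; rfl
    have h2 : F c i = ∑ t : T, (φ i ⬝ᵥ u t.1) * c t := rfl
    rw [h2] at h1
    rw [dotProduct_sum, ← h1]
    refine Finset.sum_congr rfl fun t _ => ?_
    rw [dotProduct_smul, smul_eq_mul, mul_comm]
  have gen : ∀ x : T → ℂ, star v ⬝ᵥ (∑ t : T, x t • u t.1) = ∑ t, star (c t) * x t := by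
    intro x
    simp only [v, star_sum, sum_dotProduct, dotProduct_sum, star_smul, smul_dotProduct,
      dotProduct_smul, huo, smul_eq_mul, Subtype.coe_inj]
    refine Finset.sum_congr rfl fun t _ => ?_
    rw [Finset.sum_eq_single t]
    · rw [if_pos rfl]; ring
    · intro s _ hs; rw [if_neg hs]; ring
    · simp
  have hAv : A *ᵥ v = ∑ t : T, ((hA.eigenvalues t.1 : ℂ) * c t) • u t.1 := by
    simp only [v, Matrix.mulVec_sum, Matrix.mulVec_smul, huA, smul_smul]
    refine Finset.sum_congr rfl fun t _ => ?_
    rw [mul_comm]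
  have hvv : ∑ i, ‖v i‖ ^ 2 = ∑ t, ‖c t‖ ^ 2 := by
    have h1 := gen c
    change star v ⬝ᵥ v = _ at h1
    have h2 : ((∑ i, ‖v i‖ ^ 2 : ℝ) : ℂ) = ((∑ t, ‖c t‖ ^ 2 : ℝ) : ℂ) := by
      push_cast
      simp only [dotProduct, Pi.star_apply] at h1
      simp only [← Complex.conj_mul']
      exact h1
    exact_mod_cast h2
  have hq : (star v ⬝ᵥ A *ᵥ v).re = ∑ t : T, hA.eigenvalues t.1 * ‖c t‖ ^ 2 := by
    rw [hAv, gen]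
    have : ∀ t : T, star (c t) * ((hA.eigenvalues t.1 : ℂ) * c t) =
        ((hA.eigenvalues t.1 * ‖c t‖ ^ 2 : ℝ) : ℂ) := by
      intro t
      push_cast
      rw [← Complex.conj_mul']
      simp only [Complex.star_def]; ring
    simp_rw [this]
    rw [← Complex.ofReal_sum, Complex.ofReal_re]
  have hpos : 0 < ∑ t, ‖c t‖ ^ 2 := by
    obtain ⟨t, ht⟩ := Function.ne_iff.mp hc0
    refine Finset.sum_pos' (fun _ _ => by positivity) ⟨t, Finset.mem_univ _, ?_⟩
    have : 0 < ‖c t‖ := norm_pos_iff.mpr ht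
    positivity
  have hlow : μ p * ∑ t, ‖c t‖ ^ 2 ≤ ∑ t : T, hA.eigenvalues t.1 * ‖c t‖ ^ 2 := by
    rw [Finset.mul_sum]
    refine Finset.sum_le_sum fun t _ => ?_
    apply mul_le_mul_of_nonneg_right _ (by positivity)
    rw [he]
    exact hμ t.2
  have := hb v hv
  rw [hq, hvv] at this
  exact le_of_mul_le_mul_right (hlow.trans this) hpos

theorem quad_form (M N : ℕ) (𝕎 : Set (ℝ × ℝ)) (h𝕎 : IsCompact 𝕎) (v : Fin M × Fin N → ℂ) :
    (star v ⬝ᵥ (prolate2D M N 𝕎) *ᵥ v).re =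
      ∫ x in 𝕎, ‖∑ i, star (v i) * (ee (x.1 * (i.1 : ℕ)) * ee (x.2 * (i.2 : ℕ)))‖ ^ 2 := by
  have hce := continuous_ee
  have hker : ∀ (i j : Fin M × Fin N) (x : ℝ × ℝ),
      Complex.exp (2 * (Real.pi : ℂ) * Complex.I *
      ((x.1 : ℂ) * (((i.1 : ℕ) : ℂ) - ((j.1 : ℕ) : ℂ)) +
       (x.2 : ℂ) * (((i.2 : ℕ) : ℂ) - ((j.2 : ℕ) : ℂ)))) =
      (ee (x.1 * (i.1 : ℕ)) * ee (x.2 * (i.2 : ℕ))) *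
        (ee (-(x.1 * (j.1 : ℕ))) * ee (-(x.2 * (j.2 : ℕ)))) := by
    intro i j x
    unfold ee
    rw [← Complex.exp_add, ← Complex.exp_add, ← Complex.exp_add]
    congr 1; push_cast; ring
  have hint : ∀ i j : Fin M × Fin N, IntegrableOn (fun x : ℝ × ℝ => star (v i) * (v j *
      ((ee (x.1 * ((i.1 : ℕ) : ℝ)) * ee (x.2 * ((i.2 : ℕ) : ℝ))) *
        (ee (-(x.1 * ((j.1 : ℕ) : ℝ))) * ee (-(x.2 * ((j.2 : ℕ) : ℝ))))))) 𝕎 := by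
    intro i j
    exact ContinuousOn.integrableOn_compact h𝕎 (Continuous.continuousOn (by fun_prop))
  have h2 : ∀ x : ℝ × ℝ,
      ((‖∑ i : Fin M × Fin N, star (v i) * (ee (x.1 * ((i.1 : ℕ) : ℝ)) * ee (x.2 * ((i.2 : ℕ) : ℝ)))‖ ^ 2 : ℝ) : ℂ) =
      ∑ i : Fin M × Fin N, ∑ j : Fin M × Fin N, star (v i) * (v j *
      ((ee (x.1 * ((i.1 : ℕ) : ℝ)) * ee (x.2 * ((i.2 : ℕ) : ℝ))) *
        (ee (-(x.1 * ((j.1 : ℕ) : ℝ))) * ee (-(x.2 * ((j.2 : ℕ) : ℝ)))))) := by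
    intro x
    rw [Complex.ofReal_pow, ← Complex.mul_conj', map_sum, Finset.sum_mul_sum]
    refine Finset.sum_congr rfl fun i _ => Finset.sum_congr rfl fun j _ => ?_
    rw [map_mul, map_mul, conj_ee, conj_ee, Complex.star_def, Complex.conj_conj]
    ring
  have h3 : star v ⬝ᵥ (prolate2D M N 𝕎) *ᵥ v =
      ((∫ x in 𝕎, ‖∑ i, star (v i) * (ee (x.1 * (i.1 : ℕ)) * ee (x.2 * (i.2 : ℕ)))‖ ^ 2 : ℝ) : ℂ) := by
    rw [← integral_complex_ofReal]
    simp_rw [h2]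
    rw [integral_finsetSum _ fun i _ => integrable_finsetSum _ fun j _ => hint i j]
    simp only [dotProduct, Matrix.mulVec, Pi.star_apply]
    refine Finset.sum_congr rfl fun i _ => ?_
    rw [integral_finsetSum _ fun j _ => hint i j, Finset.mul_sum]
    refine Finset.sum_congr rfl fun j _ => ?_
    rw [integral_const_mul, integral_const_mul]
    unfold prolate2D
    simp_rw [hker]
    ring
  rw [h3, Complex.ofReal_re]

theorem decay (η r : ℝ) (hη : 0 < η) (hη1 : η ≤ 1) (hr0 : 0 < r) (hr1 : r < 1) :
    ∃ C c : ℝ, 0 < C ∧ 0 < c ∧ ∀ M : ℕ,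
      (M : ℝ) * (((M + ⌊η * M⌋₊ : ℕ) : ℝ) * r ^ ⌊η * M⌋₊) ^ 2 ≤ C * Real.exp (-c * M) := by
  have hlog : Real.log r < 0 := Real.log_neg hr0 hr1
  set c := -(η * Real.log r) with hc
  have hcpos : 0 < c := by rw [hc]; nlinarith
  refine ⟨24 / (c ^ 3 * r ^ 2), c, by positivity, hcpos, fun M => ?_⟩
  set L := ⌊η * M⌋₊ with hL
  have hM0 : (0 : ℝ) ≤ M := Nat.cast_nonneg M
  have hL1 : (L : ℝ) ≤ η * M := Nat.floor_le (by positivity)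
  have hL2 : η * M - 1 ≤ L := (Nat.sub_one_lt_floor (η * M)).le
  have h1 : r ^ L ≤ r⁻¹ * Real.exp (-c * M) := by
    have e1 : r ^ L = Real.exp (Real.log r * L) := by
      rw [← Real.rpow_natCast, Real.rpow_def_of_pos hr0]
    have e2 : r⁻¹ = Real.exp (-Real.log r) := by rw [Real.exp_neg, Real.exp_log hr0]
    rw [e1, e2, ← Real.exp_add]
    apply Real.exp_le_exp.mpr
    rw [hc]
    nlinarith
  have h2 : (((M + L : ℕ) : ℝ)) ≤ 2 * M := by push_cast; nlinarith
  have h3 : (((M + L : ℕ) : ℝ) * r ^ L) ≤ 2 * M * (r⁻¹ * Real.exp (-c * M)) :=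
    mul_le_mul h2 h1 (by positivity) (by positivity)
  have h4 : (((M + L : ℕ) : ℝ) * r ^ L) ^ 2 ≤ (2 * M * (r⁻¹ * Real.exp (-c * M))) ^ 2 :=
    pow_le_pow_left₀ (by positivity) h3 2
  have h5 : (c * M) ^ 3 / (Nat.factorial 3 : ℝ) ≤ Real.exp (c * M) :=
    Real.pow_div_factorial_le_exp (c * M) (by positivity) 3
  have h6 : (M : ℝ) ^ 3 ≤ 6 / c ^ 3 * Real.exp (c * M) := by
    have : (Nat.factorial 3 : ℝ) = 6 := by norm_num [Nat.factorial]
    rw [this, mul_pow, div_le_iff₀ (by norm_num)] at h5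
    rw [div_mul_eq_mul_div, le_div_iff₀ (by positivity)]
    linarith
  have h7 : Real.exp (c * M) * Real.exp (-c * M) = 1 := by
    rw [← Real.exp_add]; simp
  set E := Real.exp (-c * M) with hE
  have hEpos : 0 < E := Real.exp_pos _
  calc _ ≤ (M : ℝ) * (2 * M * (r⁻¹ * E)) ^ 2 := mul_le_mul_of_nonneg_left h4 hM0
    _ = (M : ℝ) ^ 3 * (4 * (r⁻¹) ^ 2 * E ^ 2) := by ring
    _ ≤ (6 / c ^ 3 * Real.exp (c * M)) * (4 * (r⁻¹) ^ 2 * E ^ 2) :=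
        mul_le_mul_of_nonneg_right h6 (by positivity)
    _ = 24 / (c ^ 3 * r ^ 2) * E * (Real.exp (c * M) * E) := by field_simp; ring
    _ = _ := by rw [h7, mul_one]

set_option maxHeartbeats 1000000

theorem cubic_multiband_cluster_near_zero
    (J : ℕ) (hJ : 1 ≤ J) (f0 f1 W0 W1 : Fin J → ℝ)
    (hW0 : ∀ i, W0 i ∈ Set.Ioo (0 : ℝ) (1 / 2)) (hW1 : ∀ i, W1 i ∈ Set.Ioo (0 : ℝ) (1 / 2))
    (hsub : ∀ i, rect2 (f0 i) (f1 i) (W0 i) (W1 i) ⊆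
      Set.Icc (-(1 / 2) : ℝ) (1 / 2) ×ˢ Set.Icc (-(1 / 2) : ℝ) (1 / 2))
    (hdisj : ∀ i j, i ≠ j →
      Disjoint (rect2 (f0 i) (f1 i) (W0 i) (W1 i)) (rect2 (f0 j) (f1 j) (W0 j) (W1 j)))
    (ε : ℝ) (hε : ε ∈ Set.Ioo (0 : ℝ) (1 / (∑ i, 4 * W0 i * W1 i) - 1)) :
    ∃ (Ctil₃ Ctil₄ : ℝ) (Mtil₂ Ntil₂ : ℕ), 0 < Ctil₃ ∧ 0 < Ctil₄ ∧ 1 ≤ Mtil₂ ∧ 1 ≤ Ntil₂ ∧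
      ∀ (M N : ℕ), Mtil₂ ≤ M → Ntil₂ ≤ N →
        ∀ (hA : (prolate2D M N (⋃ i, rect2 (f0 i) (f1 i) (W0 i) (W1 i))).IsHermitian)
          (μ : Fin (M * N) → ℝ), Antitone μ →
          (∃ e : (Fin M × Fin N) ≃ Fin (M * N), hA.eigenvalues = μ ∘ e) →
          ∀ p : Fin (M * N),
            ⌈(M : ℝ) * (N : ℝ) * (∑ i, 4 * W0 i * W1 i) * (1 + ε)⌉₊ ≤ (p : ℕ) →
            μ p ≤ Ctil₃ * Real.exp (-Ctil₄ * min (M : ℝ) (N : ℝ)) := by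
  classical
  set Sg := ∑ i, 4 * W0 i * W1 i with hSg
  have hw0 : ∀ i, 0 < W0 i := fun i => (hW0 i).1
  have hw1 : ∀ i, 0 < W1 i := fun i => (hW1 i).1
  have hSpos : 0 < Sg := by
    rw [hSg]
    refine Finset.sum_pos (fun i _ => ?_) ⟨⟨0, by omega⟩, Finset.mem_univ _⟩
    have := hw0 i
    have := hw1 i
    positivity
  -- endpoints
  have hend : ∀ i, (-(1 / 2) ≤ f0 i - W0 i ∧ f0 i + W0 i ≤ 1 / 2) ∧
      (-(1 / 2) ≤ f1 i - W1 i ∧ f1 i + W1 i ≤ 1 / 2) := by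
    intro i
    have := hw0 i
    have := hw1 i
    have p1 : (f0 i - W0 i, f1 i - W1 i) ∈ rect2 (f0 i) (f1 i) (W0 i) (W1 i) := by
      constructor <;> constructor <;> simp <;> linarith
    have p2 : (f0 i + W0 i, f1 i + W1 i) ∈ rect2 (f0 i) (f1 i) (W0 i) (W1 i) := by
      constructor <;> constructor <;> simp <;> linarith
    have q1 := hsub i p1
    have q2 := hsub i p2
    exact ⟨⟨q1.1.1, q2.1.2⟩, ⟨q1.2.1, q2.2.2⟩⟩
  -- choice of η
  obtain ⟨η, hη0, hη2, hηS⟩ : ∃ η : ℝ, 0 < η ∧ η < 1 / 2 ∧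
      ∑ i, (2 * (1 + η) * (W0 i + η) + η) * (2 * (1 + η) * (W1 i + η) + η) < Sg * (1 + ε) := by
    have hcont : Continuous fun η : ℝ =>
        ∑ i, (2 * (1 + η) * (W0 i + η) + η) * (2 * (1 + η) * (W1 i + η) + η) := by fun_prop
    have hlt : (∑ i, (2 * (1 + (0 : ℝ)) * (W0 i + 0) + 0) * (2 * (1 + 0) * (W1 i + 0) + 0)) <
        Sg * (1 + ε) := by
      have h1 : (∑ i, (2 * (1 + (0 : ℝ)) * (W0 i + 0) + 0) * (2 * (1 + 0) * (W1 i + 0) + 0)) = Sg := by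
        rw [hSg]
        refine Finset.sum_congr rfl fun i _ => ?_
        ring
      rw [h1]
      have := hε.1
      nlinarith
    have hev := hcont.continuousAt.eventually_lt_const hlt
    have hev2 : ∀ᶠ η : ℝ in nhdsWithin 0 (Set.Ioi 0), 0 < η ∧ η < 1 / 2 ∧
      ∑ i, (2 * (1 + η) * (W0 i + η) + η) * (2 * (1 + η) * (W1 i + η) + η) < Sg * (1 + ε) := by
      filter_upwards [self_mem_nhdsWithin, nhdsWithin_le_nhds hev,
        nhdsWithin_le_nhds (gt_mem_nhds (show (0 : ℝ) < 1 / 2 by norm_num))] with x hx1 hx2 hx3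
      exact ⟨hx1, hx3, hx2⟩
    exact hev2.exists
  have hpi := Real.pi_pos
  have hr0 : 0 < Real.cos (Real.pi * η) := by
    apply Real.cos_pos_of_mem_Ioo
    constructor <;> nlinarith
  have hr1 : Real.cos (Real.pi * η) < 1 := by
    rw [← Real.cos_zero]
    apply Real.cos_lt_cos_of_nonneg_of_le_pi le_rfl
    · nlinarith
    · positivity
  obtain ⟨C, c, hC, hc, hdec⟩ := decay η (Real.cos (Real.pi * η)) hη0 (by linarith) hr0 hr1
  have hJ' : (0 : ℝ) < J := by exact_mod_cast hJ
  refine ⟨J * (3 * (2 * C + C ^ 2)), c, ⌈1 / η⌉₊ + 1, ⌈1 / η⌉₊ + 1, by positivity, hc, by omega,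
    by omega, ?_⟩
  intro M N hM hN hA μ hμ ⟨e, he⟩ p hp
  have hMη : ∀ M : ℕ, ⌈1 / η⌉₊ + 1 ≤ M → 1 ≤ η * M := by
    intro M hM
    have h1 : (1 / η) ≤ M := (Nat.le_ceil _).trans (by exact_mod_cast (by omega : ⌈1 / η⌉₊ ≤ M))
    rw [div_le_iff₀ hη0] at h1
    linarith
  have hM1 := hMη M hM
  have hN1 := hMη N hN
  set LM := ⌊η * M⌋₊ with hLM
  set LN := ⌊η * N⌋₊ with hLN
  have hLM1 : (LM : ℝ) ≤ η * M := Nat.floor_le (by positivity)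
  have hLN1 : (LN : ℝ) ≤ η * N := Nat.floor_le (by positivity)
  choose S0 hS0 r0 hr0c hr0b hr0e using fun i =>
    one_dim M LM (by omega) (f0 i) (W0 i) η (hw0 i) hη0 hη2.le
  choose S1 hS1 r1 hr1c hr1b hr1e using fun i =>
    one_dim N LN (by omega) (f1 i) (W1 i) η (hw1 i) hη0 hη2.le
  let ι := Σ i : Fin J, (S0 i × S1 i)
  let φ : ι → Fin M × Fin N → ℂ := fun k x =>
    star (ee (((k.2.1 : ℕ) : ℝ) / ((M + LM : ℕ) : ℝ) * (x.1 : ℕ)) *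
      ee (((k.2.2 : ℕ) : ℝ) / ((N + LN : ℕ) : ℝ) * (x.2 : ℕ)))
  refine eig_bound _ hA μ hμ e he p φ ?_ _ ?_
  · -- counting
    have hcard : Fintype.card ι = ∑ i, (S0 i).card * (S1 i).card := by
      simp [ι, Fintype.card_sigma, Fintype.card_prod]
    rw [hcard]
    refine le_trans ?_ hp
    have key : ((∑ i, (S0 i).card * (S1 i).card : ℕ) : ℝ) ≤ (M : ℝ) * N * Sg * (1 + ε) := by
      push_cast
      have hb : ∀ (M L s : ℕ) (W : ℝ), 0 < W → 1 ≤ η * M → (L : ℝ) ≤ η * M →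
          (s : ℝ) ≤ 2 * ((M + L : ℕ) : ℝ) * (W + η) + 1 →
          (s : ℝ) ≤ M * (2 * (1 + η) * (W + η) + η) := by
        intro M L s W hW h1 h2 h3
        push_cast at h3
        have : (L : ℝ) * (W + η) ≤ η * M * (W + η) :=
          mul_le_mul_of_nonneg_right h2 (by positivity)
        nlinarith
      calc _ ≤ ∑ i, ((M : ℝ) * (2 * (1 + η) * (W0 i + η) + η)) *
            (N * (2 * (1 + η) * (W1 i + η) + η)) := by
            refine Finset.sum_le_sum fun i _ => ?_
            have := hw0 i
            have := hw1 i
            exact mul_le_mul (hb M LM _ _ (hw0 i) hM1 hLM1 (hS0 i))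
              (hb N LN _ _ (hw1 i) hN1 hLN1 (hS1 i)) (by positivity) (by positivity)
        _ = (M : ℝ) * N * ∑ i, (2 * (1 + η) * (W0 i + η) + η) * (2 * (1 + η) * (W1 i + η) + η) := by
            rw [Finset.mul_sum]
            refine Finset.sum_congr rfl fun i _ => ?_
            ring
        _ ≤ (M : ℝ) * N * (Sg * (1 + ε)) := mul_le_mul_of_nonneg_left hηS.le (by positivity)
        _ = _ := by ring
    exact_mod_cast key.trans (Nat.le_ceil _)
  · intro v hv
    have hcpt : ∀ i, IsCompact (rect2 (f0 i) (f1 i) (W0 i) (W1 i)) := fun i =>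
      isCompact_Icc.prod isCompact_Icc
    rw [quad_form M N _ (isCompact_iUnion hcpt) v]
    have hce := continuous_ee
    rw [integral_iUnion_fintype (fun i => (hcpt i).measurableSet) (fun i j hij => hdisj i j hij)
      (fun i => ContinuousOn.integrableOn_compact (hcpt i) (Continuous.continuousOn (by fun_prop)))]
    set x := Real.exp (-c * min (M : ℝ) (N : ℝ)) with hx
    have hx0 : 0 < x := Real.exp_pos _
    have hx1 : x ≤ 1 := by
      apply Real.exp_le_one_iff.mpr
      have : 0 ≤ min (M : ℝ) N := by positivity
      nlinarith
    have hexpM : Real.exp (-c * M) ≤ x := by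
      apply Real.exp_le_exp.mpr
      have := min_le_left (M : ℝ) N
      nlinarith
    have hexpN : Real.exp (-c * N) ≤ x := by
      apply Real.exp_le_exp.mpr
      have := min_le_right (M : ℝ) N
      nlinarith
    have dM : (M : ℝ) * (((M + LM : ℕ) : ℝ) * Real.cos (Real.pi * η) ^ LM) ^ 2 ≤ C * x :=
      (hdec M).trans (mul_le_mul_of_nonneg_left hexpM hC.le)
    have dN : (N : ℝ) * (((N + LN : ℕ) : ℝ) * Real.cos (Real.pi * η) ^ LN) ^ 2 ≤ C * x :=
      (hdec N).trans (mul_le_mul_of_nonneg_left hexpN hC.le)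
    set ρ := ((M + LM : ℕ) : ℝ) * Real.cos (Real.pi * η) ^ LM with hρ
    set ρ' := ((N + LN : ℕ) : ℝ) * Real.cos (Real.pi * η) ^ LN with hρ'
    have hnorm : ∑ i, ‖star (v i)‖ ^ 2 = ∑ i, ‖v i‖ ^ 2 := by simp
    have hconstr : ∀ i, ∀ j ∈ S0 i, ∀ l ∈ S1 i, ∑ k : Fin M × Fin N, star (v k) *
        (ee ((j : ℝ) / ((M + LM : ℕ) : ℝ) * (k.1 : ℕ)) *
          ee ((l : ℝ) / ((N + LN : ℕ) : ℝ) * (k.2 : ℕ))) = 0 := by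
      intro i j hj l hl
      have h1 := hv ⟨i, ⟨j, hj⟩, ⟨l, hl⟩⟩
      have h2 := congrArg star h1
      rw [star_zero] at h2
      rw [← h2]
      simp only [dotProduct, star_sum, φ]
      refine Finset.sum_congr rfl fun k _ => ?_
      rw [star_mul, star_star]
    have hone : ∀ i, ∫ y in rect2 (f0 i) (f1 i) (W0 i) (W1 i),
        ‖∑ k, star (v k) * (ee (y.1 * (k.1 : ℕ)) * ee (y.2 * (k.2 : ℕ)))‖ ^ 2 ≤
        3 * (2 * C + C ^ 2) * x * ∑ k, ‖v k‖ ^ 2 := by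
      intro i
      have := hw0 i
      have := hw1 i
      have hz : ∀ f g, ∑ k, star (v k) * ((ee (f * (k.1 : ℕ)) - r0 i f k.1) *
          (ee (g * (k.2 : ℕ)) - r1 i g k.2)) = 0 := by
        intro f g
        have e1 : ∀ k : Fin M × Fin N, star (v k) * ((ee (f * (k.1 : ℕ)) - r0 i f k.1) *
            (ee (g * (k.2 : ℕ)) - r1 i g k.2)) =
            ∑ j ∈ S0 i, ∑ l ∈ S1 i, (dker (M + LM) LM f j * dker (N + LN) LN g l) *
              (star (v k) * (ee ((j : ℝ) / ((M + LM : ℕ) : ℝ) * (k.1 : ℕ)) *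
                ee ((l : ℝ) / ((N + LN : ℕ) : ℝ) * (k.2 : ℕ)))) := by
          intro k
          rw [hr0e i f k.1, hr1e i g k.2, add_sub_cancel_right, add_sub_cancel_right,
            Finset.sum_mul_sum, Finset.mul_sum]
          refine Finset.sum_congr rfl fun j _ => ?_
          rw [Finset.mul_sum]
          refine Finset.sum_congr rfl fun l _ => ?_
          ring
        simp_rw [e1]
        rw [Finset.sum_comm]
        refine Finset.sum_eq_zero fun j hj => ?_
        rw [Finset.sum_comm]
        refine Finset.sum_eq_zero fun l hl => ?_
        rw [← Finset.mul_sum, hconstr i j hj l hl, mul_zero]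
      have hb := rect_bound M N (f0 i - W0 i) (f0 i + W0 i) (f1 i - W1 i) (f1 i + W1 i) ρ ρ'
        (by linarith) (by linarith) (hend i).1.1 (hend i).1.2 (hend i).2.1 (hend i).2.2
        (r0 i) (r1 i) (hr0c i) (hr1c i) (hr0b i) (hr1b i) (fun k => star (v k)) hz
      rw [hnorm] at hb
      refine hb.trans ?_
      apply mul_le_mul_of_nonneg_right _ (by positivity)
      have hm : ((M : ℝ) * ρ ^ 2) * (N * ρ' ^ 2) ≤ (C * x) * (C * x) :=
        mul_le_mul dM dN (by positivity) (by positivity)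
      have hxx : x * x ≤ x := by nlinarith
      have hm2 := mul_le_mul_of_nonneg_left hxx (sq_nonneg C)
      have hm3 : (C * x) * (C * x) = C ^ 2 * (x * x) := by ring
      have hm4 : 3 * (2 * C + C ^ 2) * x = 3 * (C * x + C * x + C ^ 2 * x) := by ring
      rw [hm4]
      linarith
    calc _ ≤ ∑ _i : Fin J, 3 * (2 * C + C ^ 2) * x * ∑ k, ‖v k‖ ^ 2 :=
          Finset.sum_le_sum fun i _ => hone i
      _ = _ := by
          rw [Finset.sum_const, Finset.card_univ, Fintype.card_fin, nsmul_eq_mul]; ring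
end
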